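/- Let η : ℝ → ℂ be a smooth (C^∞) function with support contained in [−2, 2], and let φ : ℝ → ℝ be a smooth (C^∞) function with 0 ≤ φ ≤ 1 and support contained in {τ : 1/2 ≤ |τ| ≤ 2}. Then there exists a constant C > 0 (depending only on η and φ) such that for every a ≥ 0: Σ_{j ∈ ℤ} (1 + 2^j + a)^{1/2} · ‖h_j^a‖_{L²(ℝ)} ≤ C (1 + a)^{1/2}, where h_j^a(t) = ∫_ℝ e^{2πitτ} φ(2^{−j} τ) ( ∫_ℝ e^{−2πisτ} η(s) ( e^{2a·min(s,0)} − e^{−a|s|} ) ds ) dτ. -/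

import Mathlib

open MeasureTheory Real
open scoped FourierTransform SchwartzMap

lemma aux_plancherel (g : ℝ → ℂ) (hg : ContDiff ℝ (⊤ : ℕ∞) g) (hc : HasCompactSupport g) :
    ∫ t : ℝ, ‖∫ τ : ℝ, Complex.exp (2 * π * t * τ * Complex.I) * g τ‖ ^ 2 = ∫ τ : ℝ, ‖g τ‖ ^ 2 := by
  have h := SchwartzMap.integral_norm_sq_fourier (𝓕⁻ (hc.toSchwartzMap hg))
  simp only [FourierTransform.fourier_fourierInv_eq] at h
  rw [show (∫ τ : ℝ, ‖g τ‖ ^ 2) = ∫ τ : ℝ, ‖(hc.toSchwartzMap hg) τ‖ ^ 2 from rfl, h]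
  congr 1
  ext t
  rw [SchwartzMap.fourierInv_coe, Real.fourierInv_eq']
  congr 2
  congr 1
  ext τ
  simp only [smul_eq_mul]
  congr 2
  simp
  ring

lemma aux_smooth (f : ℝ → ℂ) (hf : Continuous f) (hc : HasCompactSupport f) :
    ContDiff ℝ (⊤ : ℕ∞)
      (fun τ : ℝ => ∫ s : ℝ, Complex.exp (-(2 * π * s * τ) * Complex.I) * f s) := by
  have : (fun τ : ℝ => ∫ s : ℝ, Complex.exp (-(2 * π * s * τ) * Complex.I) * f s) = 𝓕 f := by
    ext τ
    rw [Real.fourier_real_eq_integral_exp_smul]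
    congr 1
    ext s
    simp only [smul_eq_mul]
    congr 2
    simp
  rw [this]
  apply Real.contDiff_fourier
  intro n _
  apply Continuous.integrable_of_hasCompactSupport
  · fun_prop
  · exact (hc.norm).mul_left

lemma aux_local (f : ℝ → ℂ) (hsupp : ∀ s, s ∉ Set.Icc (-2 : ℝ) 2 → f s = 0) (τ : ℝ) :
    ∫ s : ℝ, Complex.exp (-(2 * π * s * τ) * Complex.I) * f s
      = ∫ s in (-3 : ℝ)..3, Complex.exp (-(2 * π * s * τ) * Complex.I) * f s := by
  rw [intervalIntegral.integral_of_le (by norm_num)]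
  symm
  apply setIntegral_eq_integral_of_forall_compl_eq_zero
  intro s hs
  rw [hsupp s, mul_zero]
  intro h
  exact hs ⟨by linarith [h.1], by linarith [h.2]⟩

lemma aux_normexp (s τ : ℝ) : ‖Complex.exp (-(2 * π * s * τ) * Complex.I)‖ = 1 := by
  have : (-(2 * π * s * τ) * Complex.I : ℂ) = ((-(2 * π * s * τ) : ℝ) : ℂ) * Complex.I := by
    push_cast; ring
  rw [this, Complex.norm_exp_ofReal_mul_I]

lemma aux_triv (f : ℝ → ℂ) (τ : ℝ) :
    ‖∫ s in (-3 : ℝ)..3, Complex.exp (-(2 * π * s * τ) * Complex.I) * f s‖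
      ≤ ∫ s in (-3 : ℝ)..3, ‖f s‖ := by
  refine (intervalIntegral.norm_integral_le_integral_norm (by norm_num)).trans (le_of_eq ?_)
  simp only [norm_mul, aux_normexp, one_mul]

lemma aux_ibp (g g' : ℝ → ℂ) (hg : Continuous g)
    (hd : ∀ x, HasDerivWithinAt g (g' x) (Set.Ioi x) x)
    (hi : IntervalIntegrable g' volume (-3) 3) (h3 : g 3 = 0) (h3' : g (-3) = 0) (τ : ℝ) :
    (2 * π * τ * Complex.I) *
      ∫ s in (-3 : ℝ)..3, Complex.exp (-(2 * π * s * τ) * Complex.I) * g s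
      = ∫ s in (-3 : ℝ)..3, Complex.exp (-(2 * π * s * τ) * Complex.I) * g' s := by
  have hE : ∀ x : ℝ, HasDerivAt (fun s : ℝ => Complex.exp (-(2 * π * s * τ) * Complex.I))
      (Complex.exp (-(2 * π * x * τ) * Complex.I) * (-(2 * π * τ * Complex.I))) x := by
    intro x
    have h0 : HasDerivAt (fun s : ℝ => (s : ℂ)) 1 x := Complex.ofRealCLM.hasDerivAt
    have h1 : HasDerivAt (fun s : ℝ => (-(2 * π * s * τ) * Complex.I : ℂ))
        (-(2 * π * τ * Complex.I)) x := by
      convert! (h0.mul_const (-(2 * π * τ * Complex.I))) using 1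
      · ext s; ring
      · ring
    exact h1.cexp
  have hEc : Continuous (fun s : ℝ => Complex.exp (-(2 * π * s * τ) * Complex.I)) := by fun_prop
  have hI1 : IntervalIntegrable (fun s : ℝ => Complex.exp (-(2 * π * s * τ) * Complex.I) * g' s)
      volume (-3) 3 := hi.continuousOn_mul hEc.continuousOn
  have hI2 : IntervalIntegrable (fun s : ℝ => (-(2 * π * τ * Complex.I)) *
      (Complex.exp (-(2 * π * s * τ) * Complex.I) * g s)) volume (-3) 3 := by
    apply Continuous.intervalIntegrable; fun_prop
  have key := intervalIntegral.integral_eq_sub_of_hasDeriv_right_of_le (a := -3) (b := 3)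
    (f := fun s : ℝ => Complex.exp (-(2 * π * s * τ) * Complex.I) * g s)
    (f' := fun s : ℝ => (-(2 * π * τ * Complex.I)) *
      (Complex.exp (-(2 * π * s * τ) * Complex.I) * g s) +
      Complex.exp (-(2 * π * s * τ) * Complex.I) * g' s) (by norm_num)
    (hEc.mul hg).continuousOn (by
      intro x _
      convert! (hE x).hasDerivWithinAt.mul (hd x) using 1
      ring) (hI2.add hI1)
  rw [intervalIntegral.integral_add hI2 hI1, intervalIntegral.integral_const_mul] at key
  simp only [h3, h3', mul_zero, sub_zero] at key
  linear_combination -key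

lemma aux_expint (a : ℝ) (ha : 0 ≤ a) :
    ∫ s in (-3 : ℝ)..3, a * Real.exp (-(a * |s|)) ≤ 2 := by
  have hc : Continuous (fun s : ℝ => a * Real.exp (-(a * |s|))) := by fun_prop
  rw [← intervalIntegral.integral_add_adjacent_intervals (b := 0)
    (hc.intervalIntegrable _ _) (hc.intervalIntegrable _ _)]
  have h1 : ∫ s in (-3 : ℝ)..0, a * Real.exp (-(a * |s|)) = 1 - Real.exp (a * (-3)) := by
    have : ∫ s in (-3 : ℝ)..0, a * Real.exp (-(a * |s|)) = ∫ s in (-3 : ℝ)..0, a * Real.exp (a * s) := by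
      apply intervalIntegral.integral_congr
      intro s hs
      rw [Set.uIcc_of_le (by norm_num)] at hs
      simp [abs_of_nonpos hs.2]
    rw [this, intervalIntegral.integral_eq_sub_of_hasDerivAt (f := fun s => Real.exp (a * s))]
    · simp
    · intro x _
      convert! ((hasDerivAt_id x).const_mul a).exp using 1
      simp; ring
    · apply Continuous.intervalIntegrable; fun_prop
  have h2 : ∫ s in (0 : ℝ)..3, a * Real.exp (-(a * |s|)) = 1 - Real.exp (-(a * 3)) := by
    have : ∫ s in (0 : ℝ)..3, a * Real.exp (-(a * |s|)) = ∫ s in (0 : ℝ)..3, a * Real.exp (-(a * s)) := by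
      apply intervalIntegral.integral_congr
      intro s hs
      rw [Set.uIcc_of_le (by norm_num)] at hs
      simp [abs_of_nonneg hs.1]
    rw [this, intervalIntegral.integral_eq_sub_of_hasDerivAt (f := fun s => -Real.exp (-(a * s)))]
    · simp; ring
    · intro x _
      convert! (((hasDerivAt_id x).const_mul a).neg.exp).neg using 1
      simp; ring
    · apply Continuous.intervalIntegrable; fun_prop
  rw [h1, h2]
  linarith [Real.exp_pos (a * (-3)), Real.exp_pos (-(a*3))]

/-- multiplier -/
noncomputable def mm (a s : ℝ) : ℝ := Real.exp (2 * a * min s 0) - Real.exp (-(a * |s|))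

/-- first derivative -/
noncomputable def mm1 (a s : ℝ) : ℝ :=
  2 * a * Real.exp (2 * a * min s 0) - a * Real.exp (-(a * |s|)) +
    2 * a * (Real.exp (-(a * max s 0)) - 1)

/-- second (right) derivative -/
noncomputable def mm2 (a s : ℝ) : ℝ :=
  if 0 ≤ s then -(a ^ 2 * Real.exp (-(a * s)))
  else 4 * a ^ 2 * Real.exp (2 * a * s) - a ^ 2 * Real.exp (a * s)

lemma mm_pos (a s : ℝ) (hs : 0 ≤ s) : mm a s = 1 - Real.exp (-(a * s)) := by
  simp [mm, abs_of_nonneg hs, min_eq_right hs]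

lemma mm_neg (a s : ℝ) (hs : s ≤ 0) : mm a s = Real.exp (2 * a * s) - Real.exp (a * s) := by
  simp [mm, abs_of_nonpos hs, min_eq_left hs]

lemma mm1_pos (a s : ℝ) (hs : 0 ≤ s) : mm1 a s = a * Real.exp (-(a * s)) := by
  simp [mm1, abs_of_nonneg hs, min_eq_right hs, max_eq_left hs]; ring

lemma mm1_neg (a s : ℝ) (hs : s ≤ 0) :
    mm1 a s = 2 * a * Real.exp (2 * a * s) - a * Real.exp (a * s) := by
  simp [mm1, abs_of_nonpos hs, min_eq_left hs, max_eq_right hs]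

lemma hasDeriv_exp_lin (c x : ℝ) : HasDerivAt (fun s => Real.exp (c * s)) (c * Real.exp (c * x)) x := by
  convert! ((hasDerivAt_id x).const_mul c).exp using 1
  simp; ring

lemma mm_deriv (a x : ℝ) : HasDerivWithinAt (mm a) (mm1 a x) (Set.Ioi x) x := by
  rcases le_or_gt 0 x with hx | hx
  · rw [mm1_pos a x hx]
    have h : HasDerivAt (fun s => 1 - Real.exp (-a * s)) (a * Real.exp (-(a * x))) x := by
      convert! (hasDeriv_exp_lin (-a) x).const_sub 1 using 1
      ring_nf
    refine h.hasDerivWithinAt.congr (fun y hy => ?_) ?_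
    · rw [mm_pos a y (hx.trans (le_of_lt hy))]; ring_nf
    · rw [mm_pos a x hx]; ring_nf
  · rw [mm1_neg a x hx.le]
    have h : HasDerivAt (fun s => Real.exp (2 * a * s) - Real.exp (a * s))
      (2 * a * Real.exp (2 * a * x) - a * Real.exp (a * x)) x :=
      (hasDeriv_exp_lin (2 * a) x).sub (hasDeriv_exp_lin a x)
    refine (h.congr_of_eventuallyEq ?_).hasDerivWithinAt
    filter_upwards [Iio_mem_nhds hx] with y hy
    exact mm_neg a y (le_of_lt hy)

lemma mm1_deriv (a x : ℝ) : HasDerivWithinAt (mm1 a) (mm2 a x) (Set.Ioi x) x := by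
  rcases le_or_gt 0 x with hx | hx
  · rw [mm2, if_pos hx]
    have h : HasDerivAt (fun s => a * Real.exp (-a * s)) (-(a ^ 2 * Real.exp (-(a * x)))) x := by
      convert! (hasDeriv_exp_lin (-a) x).const_mul a using 1
      ring_nf
    refine h.hasDerivWithinAt.congr (fun y hy => ?_) ?_
    · rw [mm1_pos a y (hx.trans (le_of_lt hy))]; ring_nf
    · rw [mm1_pos a x hx]; ring_nf
  · rw [mm2, if_neg hx.not_ge]
    have h : HasDerivAt (fun s => 2 * a * Real.exp (2 * a * s) - a * Real.exp (a * s))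
      (4 * a ^ 2 * Real.exp (2 * a * x) - a ^ 2 * Real.exp (a * x)) x := by
      convert! ((hasDeriv_exp_lin (2 * a) x).const_mul (2 * a)).sub
        ((hasDeriv_exp_lin a x).const_mul a) using 1
      ring
    refine (h.congr_of_eventuallyEq ?_).hasDerivWithinAt
    filter_upwards [Iio_mem_nhds hx] with y hy
    exact mm1_neg a y (le_of_lt hy)

lemma mm_cont (a : ℝ) : Continuous (mm a) := by unfold mm; fun_prop
lemma mm1_cont (a : ℝ) : Continuous (mm1 a) := by unfold mm1; fun_prop
lemma mm2_meas (a : ℝ) : Measurable (mm2 a) := by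
  unfold mm2
  apply Measurable.ite measurableSet_Ici <;> fun_prop

lemma mm_bound (a s : ℝ) (ha : 0 ≤ a) : |mm a s| ≤ 1 := by
  have h1 : Real.exp (2 * a * min s 0) ≤ 1 := by
    rw [Real.exp_le_one_iff]
    exact mul_nonpos_of_nonneg_of_nonpos (by positivity) (min_le_right _ _)
  have h2 : Real.exp (-(a * |s|)) ≤ 1 := by
    rw [Real.exp_le_one_iff]
    have := mul_nonneg ha (abs_nonneg s)
    linarith
  rw [mm, abs_le]
  constructor <;> linarith [Real.exp_pos (2 * a * min s 0), Real.exp_pos (-(a * |s|))]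

lemma exp_cmp (a s : ℝ) (ha : 0 ≤ a) (hs : s ≤ 0) : Real.exp (2 * a * s) ≤ Real.exp (a * s) := by
  rw [Real.exp_le_exp]
  nlinarith [mul_nonpos_of_nonneg_of_nonpos ha hs]

lemma mm1_bound (a s : ℝ) (ha : 0 ≤ a) : |mm1 a s| ≤ 3 * (a * Real.exp (-(a * |s|))) := by
  rcases le_or_gt 0 s with hx | hx
  · rw [mm1_pos a s hx, abs_of_nonneg hx, abs_of_nonneg (by positivity)]
    have : 0 ≤ a * Real.exp (-(a * s)) := by positivity
    linarith
  · rw [mm1_neg a s hx.le, abs_of_nonpos hx.le, mul_neg, neg_neg]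
    have h1 := mul_le_mul_of_nonneg_left (exp_cmp a s ha hx.le) ha
    have h2 : 0 ≤ a * Real.exp (2 * a * s) := by positivity
    have h3 : 0 ≤ a * Real.exp (a * s) := by positivity
    rw [abs_le]
    constructor <;> nlinarith

lemma mm2_bound (a s : ℝ) (ha : 0 ≤ a) : |mm2 a s| ≤ 5 * a * (a * Real.exp (-(a * |s|))) := by
  rcases le_or_gt 0 s with hx | hx
  · rw [mm2, if_pos hx, abs_of_nonneg hx, abs_neg, abs_of_nonneg (by positivity)]
    have : 0 ≤ a ^ 2 * Real.exp (-(a * s)) := by positivity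
    linarith
  · rw [mm2, if_neg hx.not_ge, abs_of_nonpos hx.le, mul_neg, neg_neg]
    have h1 := mul_le_mul_of_nonneg_left (exp_cmp a s ha hx.le) (sq_nonneg a)
    have h2 : 0 ≤ a ^ 2 * Real.exp (2 * a * s) := by positivity
    have h3 : 0 ≤ a ^ 2 * Real.exp (a * s) := by positivity
    rw [abs_le]
    constructor <;> nlinarith

lemma mm2_int (a : ℝ) (ha : 0 ≤ a) : IntervalIntegrable (fun s => ((mm2 a s : ℝ) : ℂ)) volume (-3) 3 := by
  have hc : Continuous (fun s : ℝ => 5 * a * (a * Real.exp (-(a * |s|)))) := by fun_prop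
  refine (hc.intervalIntegrable (-3) 3).mono_fun ?_ ?_
  · exact (Complex.measurable_ofReal.comp (mm2_meas a)).aestronglyMeasurable
  · refine Filter.Eventually.of_forall (fun s => ?_)
    simp only [Complex.norm_real, Real.norm_eq_abs]
    exact (mm2_bound a s ha).trans (le_abs_self _)

lemma aux_intbound (a A B : ℝ) (ha : 0 ≤ a) (hB : 0 ≤ B) (f : ℝ → ℂ)
    (hf : IntervalIntegrable f volume (-3) 3)
    (h : ∀ s, ‖f s‖ ≤ A + B * (a * Real.exp (-(a * |s|)))) :
    ∫ s in (-3 : ℝ)..3, ‖f s‖ ≤ 6 * A + 2 * B := by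
  have hc : Continuous (fun s : ℝ => a * Real.exp (-(a * |s|))) := by fun_prop
  have h1 : ∫ s in (-3 : ℝ)..3, ‖f s‖ ≤ ∫ s in (-3 : ℝ)..3, (A + B * (a * Real.exp (-(a * |s|)))) := by
    apply intervalIntegral.integral_mono_on (by norm_num) hf.norm
    · apply Continuous.intervalIntegrable; fun_prop
    · intro s _; exact h s
  rw [intervalIntegral.integral_add (by simp) ((hc.intervalIntegrable _ _).const_mul B),
    intervalIntegral.integral_const_mul, intervalIntegral.integral_const] at h1
  have h2 := mul_le_mul_of_nonneg_left (aux_expint a ha) hB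
  rw [smul_eq_mul] at h1
  linarith

lemma aux_decay (η : ℝ → ℂ) (hη : ContDiff ℝ (⊤ : ℕ∞) η)
    (hηsupp : Function.support η ⊆ Set.Icc (-2) 2) :
    ∃ K : ℝ, 0 < K ∧ ∀ a : ℝ, 0 ≤ a → ∀ τ : ℝ,
      ‖∫ s : ℝ, Complex.exp (-(2 * π * s * τ) * Complex.I) * (η s * ((mm a s : ℝ) : ℂ))‖ ≤ K ∧
      |τ| * ‖∫ s : ℝ, Complex.exp (-(2 * π * s * τ) * Complex.I) * (η s * ((mm a s : ℝ) : ℂ))‖ ≤ K ∧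
      |τ| ^ 2 * ‖∫ s : ℝ, Complex.exp (-(2 * π * s * τ) * Complex.I) * (η s * ((mm a s : ℝ) : ℂ))‖
        ≤ K * (1 + a) := by
  have hc0 : HasCompactSupport η := HasCompactSupport.of_support_subset_isCompact isCompact_Icc hηsupp
  have ht0 : tsupport η ⊆ Set.Icc (-2) 2 := closure_minimal hηsupp isClosed_Icc
  have hη1 : ContDiff ℝ (⊤ : ℕ∞) (deriv η) := (contDiff_infty_iff_deriv.1 hη).2
  have hη2 : ContDiff ℝ (⊤ : ℕ∞) (deriv (deriv η)) := (contDiff_infty_iff_deriv.1 hη1).2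
  have hz : ∀ s, s ∉ Set.Icc (-2 : ℝ) 2 → η s = 0 := fun s hs => by
    by_contra h; exact hs (hηsupp h)
  have hz1 : ∀ s, s ∉ Set.Icc (-2 : ℝ) 2 → deriv η s = 0 := fun s hs => by
    by_contra h; exact hs (ht0 (support_deriv_subset h))
  obtain ⟨M0, hM0⟩ := hη.continuous.bounded_above_of_compact_support hc0
  obtain ⟨M1, hM1⟩ := hη1.continuous.bounded_above_of_compact_support hc0.deriv
  obtain ⟨M2, hM2⟩ := hη2.continuous.bounded_above_of_compact_support hc0.deriv.deriv
  have p0 : 0 ≤ M0 := (norm_nonneg _).trans (hM0 0)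
  have p1 : 0 ≤ M1 := (norm_nonneg _).trans (hM1 0)
  have p2 : 0 ≤ M2 := (norm_nonneg _).trans (hM2 0)
  refine ⟨1 + 20 * (M0 + M1 + M2), by positivity, ?_⟩
  intro a ha τ
  set f : ℝ → ℂ := fun s => η s * ((mm a s : ℝ) : ℂ) with hf
  set f1 : ℝ → ℂ := fun s => deriv η s * ((mm a s : ℝ) : ℂ) + η s * ((mm1 a s : ℝ) : ℂ) with hf1
  set f2 : ℝ → ℂ := fun s => (deriv (deriv η) s * ((mm a s : ℝ) : ℂ) + deriv η s * ((mm1 a s : ℝ) : ℂ))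
    + (deriv η s * ((mm1 a s : ℝ) : ℂ) + η s * ((mm2 a s : ℝ) : ℂ)) with hf2
  have c0 := hη.continuous
  have c1 := hη1.continuous
  have c2 := hη2.continuous
  have cm := mm_cont a
  have cm1 := mm1_cont a
  have cf : Continuous f := by fun_prop
  have cf1 : Continuous f1 := by fun_prop
  have i2 : IntervalIntegrable f2 volume (-3) 3 := by
    have q : Continuous (fun s => (deriv (deriv η) s * ((mm a s : ℝ) : ℂ) + deriv η s * ((mm1 a s : ℝ) : ℂ))) := by
      fun_prop
    have q2 : Continuous (fun s => deriv η s * ((mm1 a s : ℝ) : ℂ)) := by fun_prop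
    exact (q.intervalIntegrable _ _).add ((q2.intervalIntegrable _ _).add
      ((mm2_int a ha).continuousOn_mul c0.continuousOn))
  have dη : ∀ x, HasDerivAt η (deriv η x) x := fun x =>
    ((contDiff_infty_iff_deriv.1 hη).1 x).hasDerivAt
  have dη1 : ∀ x, HasDerivAt (deriv η) (deriv (deriv η) x) x := fun x =>
    ((contDiff_infty_iff_deriv.1 hη1).1 x).hasDerivAt
  have d1 : ∀ x, HasDerivWithinAt f (f1 x) (Set.Ioi x) x := fun x =>
    (dη x).hasDerivWithinAt.mul (mm_deriv a x).ofReal_comp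
  have d2 : ∀ x, HasDerivWithinAt f1 (f2 x) (Set.Ioi x) x := fun x =>
    ((dη1 x).hasDerivWithinAt.mul (mm_deriv a x).ofReal_comp).add
      ((dη x).hasDerivWithinAt.mul (mm1_deriv a x).ofReal_comp)
  have e3 : (3 : ℝ) ∉ Set.Icc (-2 : ℝ) 2 := by norm_num
  have e3' : (-3 : ℝ) ∉ Set.Icc (-2 : ℝ) 2 := by norm_num
  have I1 := aux_ibp f f1 cf d1 (cf1.intervalIntegrable _ _) (by simp [hf, hz _ e3])
    (by simp [hf, hz _ e3']) τ
  have I2 := aux_ibp f1 f2 cf1 d2 i2 (by simp [hf1, hz _ e3, hz1 _ e3])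
    (by simp [hf1, hz _ e3', hz1 _ e3']) τ
  have hE0 : ∀ s, 0 ≤ a * Real.exp (-(a * |s|)) := fun s => by positivity
  have nm : ∀ s, ‖((mm a s : ℝ) : ℂ)‖ ≤ 1 := fun s => by
    simpa using mm_bound a s ha
  have nm1 : ∀ s, ‖((mm1 a s : ℝ) : ℂ)‖ ≤ 3 * (a * Real.exp (-(a * |s|))) := fun s => by
    simpa using mm1_bound a s ha
  have nm2 : ∀ s, ‖((mm2 a s : ℝ) : ℂ)‖ ≤ 5 * a * (a * Real.exp (-(a * |s|))) := fun s => by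
    simpa using mm2_bound a s ha
  have pm : ∀ {z w : ℂ} {A B : ℝ}, ‖z‖ ≤ A → ‖w‖ ≤ B → ‖z * w‖ ≤ A * B := by
    intro z w A B h1 h2
    rw [norm_mul]
    exact mul_le_mul h1 h2 (norm_nonneg _) ((norm_nonneg _).trans h1)
  have b0 : ∫ s in (-3 : ℝ)..3, ‖f s‖ ≤ 6 * M0 + 2 * 0 := by
    apply aux_intbound a _ _ ha le_rfl f (cf.intervalIntegrable _ _)
    intro s
    have := pm (hM0 s) (nm s)
    simp only [hf]; linarith
  have b1 : ∫ s in (-3 : ℝ)..3, ‖f1 s‖ ≤ 6 * M1 + 2 * (3 * M0) := by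
    apply aux_intbound a _ _ ha (by positivity) f1 (cf1.intervalIntegrable _ _)
    intro s
    have h1 := pm (hM1 s) (nm s)
    have h2 := pm (hM0 s) (nm1 s)
    refine (norm_add_le _ _).trans ?_
    linarith
  have b2 : ∫ s in (-3 : ℝ)..3, ‖f2 s‖ ≤ 6 * M2 + 2 * (6 * M1 + 5 * a * M0) := by
    apply aux_intbound a _ _ ha (by positivity) f2 i2
    intro s
    have h1 := pm (hM2 s) (nm s)
    have h2 := pm (hM1 s) (nm1 s)
    have h3 := pm (hM0 s) (nm2 s)
    refine (norm_add_le _ _).trans ?_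
    have h4 := norm_add_le (deriv (deriv η) s * ((mm a s : ℝ) : ℂ)) (deriv η s * ((mm1 a s : ℝ) : ℂ))
    have h5 := norm_add_le (deriv η s * ((mm1 a s : ℝ) : ℂ)) (η s * ((mm2 a s : ℝ) : ℂ))
    linarith
  have t0 := aux_triv f τ
  have t1 := aux_triv f1 τ
  have t2 := aux_triv f2 τ
  rw [aux_local f (fun s hs => by simp [hf, hz s hs]) τ]
  rw [← I1] at t1
  rw [← I2, ← I1] at t2
  rw [norm_mul] at t1
  rw [norm_mul, norm_mul (2 * π * τ * Complex.I : ℂ) (∫ s in (-3 : ℝ)..3, _)] at t2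
  have hn : |τ| ≤ ‖(2 * π * τ * Complex.I : ℂ)‖ := by
    simp only [norm_mul, Complex.norm_I, Complex.norm_real, Real.norm_eq_abs, mul_one,
      abs_of_pos Real.pi_pos, Complex.norm_ofNat]
    nlinarith [abs_nonneg τ, Real.pi_gt_three]
  set N := ‖(2 * π * τ * Complex.I : ℂ)‖
  set X := ‖∫ s in (-3 : ℝ)..3, Complex.exp (-(2 * π * s * τ) * Complex.I) * f s‖
  have hX : 0 ≤ X := norm_nonneg _
  have hτ := abs_nonneg τ
  have u1 : |τ| * X ≤ N * X := mul_le_mul_of_nonneg_right hn hX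
  have u2 : |τ| ^ 2 * X ≤ N * (N * X) := by
    rw [sq, mul_assoc]
    exact mul_le_mul hn u1 (by positivity) (hτ.trans hn)
  have r1 := mul_nonneg ha p0
  have r2 := mul_nonneg ha p1
  have r3 := mul_nonneg ha p2
  refine ⟨by linarith, by linarith, by nlinarith⟩

lemma aux_summable : Summable (fun j : ℤ => ((2 : ℝ) ^ (-|j|)) ^ ((1 : ℝ) / 2)) := by
  have hg : Summable (fun n : ℕ => (((1 : ℝ) / 2) ^ ((1 : ℝ) / 2)) ^ n) :=
    summable_geometric_of_lt_one (by positivity) (Real.rpow_lt_one (by norm_num) (by norm_num) (by norm_num))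
  have e : ∀ n : ℕ, (((2 : ℝ) ^ (-(n : ℤ))) ^ ((1 : ℝ) / 2)) = (((1 : ℝ) / 2) ^ ((1 : ℝ) / 2)) ^ n := by
    intro n
    rw [← Real.rpow_natCast, ← Real.rpow_mul (by norm_num), mul_comm, Real.rpow_mul (by norm_num),
      Real.rpow_natCast, zpow_neg, zpow_natCast]
    simp
  apply Summable.of_nat_of_neg
  · refine hg.congr (fun n => ?_)
    rw [← e n, Nat.abs_cast]
  · refine hg.congr (fun n => ?_)
    rw [← e n, abs_neg, Nat.abs_cast]

lemma aux_alg (K a x S : ℝ) (hK : 0 < K) (ha : 0 ≤ a) (hx : 0 < x) (b : ℝ) (hb0 : 0 ≤ b)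
    (hb : (x ≤ 1 ∧ b = x) ∨ (1 ≤ x ∧ b = x⁻¹)) (hS : 0 ≤ S)
    (h0 : S ≤ K) (h1 : x * S ≤ 2 * K) (h2 : x ^ 2 * S ≤ 4 * (K * (1 + a))) :
    (1 + x + a) * (4 * x * S ^ 2) ≤ 49 * K ^ 2 * (1 + a) * b := by
  rcases hb with ⟨hx1, rfl⟩ | ⟨hx1, rfl⟩
  · have hS2 : S ^ 2 ≤ K ^ 2 := pow_le_pow_left₀ hS h0 2
    have : (1 + b + a) * (4 * b * S ^ 2) ≤ (2 * (1 + a)) * (4 * b * K ^ 2) := by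
      gcongr; linarith
    have : 0 ≤ K ^ 2 * (1 + a) * b := by positivity
    nlinarith
  · rw [← div_eq_mul_inv, le_div_iff₀ hx]
    have h3 : (x * S) * (x * S) ≤ (2 * K) * (2 * K) :=
      mul_le_mul h1 h1 (by positivity) (by positivity)
    have h4 : (x * S) * (x ^ 2 * S) ≤ (2 * K) * (4 * (K * (1 + a))) :=
      mul_le_mul h1 h2 (by positivity) (by positivity)
    have h5 := mul_le_mul_of_nonneg_left h3 (show 0 ≤ 1 + a by linarith)
    have : 0 ≤ K ^ 2 * (1 + a) := by positivity
    nlinarith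

lemma aux_main (η : ℝ → ℂ) (hη : ContDiff ℝ (⊤ : ℕ∞) η)
    (hηsupp : Function.support η ⊆ Set.Icc (-2) 2)
    (φ : ℝ → ℝ) (hφ : ContDiff ℝ (⊤ : ℕ∞) φ)
    (hφ0 : ∀ τ, 0 ≤ φ τ) (hφ1 : ∀ τ, φ τ ≤ 1)
    (hφsupp : Function.support φ ⊆ {τ : ℝ | 1 / 2 ≤ |τ| ∧ |τ| ≤ 2}) :
    ∃ K : ℝ, 0 < K ∧ ∀ a : ℝ, 0 ≤ a → ∀ j : ℤ,
        (1 + (2 : ℝ) ^ j + a) ^ ((1 : ℝ) / 2) *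
          (∫ t : ℝ, ‖∫ τ : ℝ, Complex.exp (2 * π * t * τ * Complex.I) *
              ((φ ((2 : ℝ) ^ (-j) * τ) : ℂ) *
                ∫ s : ℝ, Complex.exp (-(2 * π * s * τ) * Complex.I) *
                  (η s * ((mm a s : ℝ) : ℂ)))‖ ^ 2) ^
            ((1 : ℝ) / 2) ≤ (7 * K * (1 + a) ^ ((1 : ℝ) / 2)) * ((2 : ℝ) ^ (-|j|)) ^ ((1 : ℝ) / 2) := by
  obtain ⟨K, hK, hdec⟩ := aux_decay η hη hηsupp
  refine ⟨K, hK, fun a ha j => ?_⟩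
  set x : ℝ := (2 : ℝ) ^ j with hxdef
  have hx : 0 < x := by positivity
  have hxi : (2 : ℝ) ^ (-j) = x⁻¹ := by rw [zpow_neg]
  rw [hxi]
  set F : ℝ → ℂ := fun τ => ∫ s : ℝ, Complex.exp (-(2 * π * s * τ) * Complex.I) *
                  (η s * ((mm a s : ℝ) : ℂ)) with hF
  have hc0 : HasCompactSupport η := HasCompactSupport.of_support_subset_isCompact isCompact_Icc hηsupp
  have hFs : ContDiff ℝ (⊤ : ℕ∞) F := by
    apply aux_smooth
    · have := hη.continuous
      have := mm_cont a
      fun_prop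
    · exact hc0.mul_right
  have hsup : ∀ τ, φ (x⁻¹ * τ) ≠ 0 → x / 2 ≤ |τ| ∧ |τ| ≤ 2 * x := by
    intro τ h
    have h' := hφsupp h
    simp only [Set.mem_ofPred_eq, abs_mul, abs_inv, abs_of_pos hx] at h'
    obtain ⟨h1, h2⟩ := h'
    rw [inv_mul_eq_div] at h1 h2
    rw [le_div_iff₀ hx] at h1
    rw [div_le_iff₀ hx] at h2
    exact ⟨by linarith, h2⟩
  set g : ℝ → ℂ := fun τ => (φ (x⁻¹ * τ) : ℂ) * F τ with hg
  have hgs : ContDiff ℝ (⊤ : ℕ∞) g := by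
    refine ContDiff.mul ?_ hFs
    exact Complex.ofRealCLM.contDiff.comp (hφ.comp (contDiff_const.mul contDiff_id))
  have hgsupp : Function.support g ⊆ Set.Icc (-(2 * x)) (2 * x) := by
    intro τ h
    have : φ (x⁻¹ * τ) ≠ 0 := by
      intro h0; apply h; simp [hg, h0]
    exact abs_le.1 (hsup τ this).2
  have hgc : HasCompactSupport g := HasCompactSupport.of_support_subset_isCompact isCompact_Icc hgsupp
  have hP := aux_plancherel g hgs hgc
  simp only [hg] at hP
  rw [hP]
  -- sup bound
  set S : ℝ := min K (min (2 * K / x) (4 * (K * (1 + a)) / x ^ 2)) with hSdef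
  have hS : 0 ≤ S := by positivity
  have hS0 : S ≤ K := min_le_left _ _
  have hS1 : x * S ≤ 2 * K := by
    have : S ≤ 2 * K / x := (min_le_right _ _).trans (min_le_left _ _)
    rw [le_div_iff₀ hx] at this; linarith
  have hS2 : x ^ 2 * S ≤ 4 * (K * (1 + a)) := by
    have : S ≤ 4 * (K * (1 + a)) / x ^ 2 := (min_le_right _ _).trans (min_le_right _ _)
    rw [le_div_iff₀ (by positivity)] at this; linarith
  have hgS : ∀ τ, ‖g τ‖ ≤ S := by
    intro τ
    by_cases h : φ (x⁻¹ * τ) = 0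
    · simp [hg, h, hS]
    · obtain ⟨l, _⟩ := hsup τ h
      obtain ⟨d0, d1, d2⟩ := hdec a ha τ
      have hle : ‖g τ‖ ≤ ‖F τ‖ := by
        simp only [hg, norm_mul, Complex.norm_real, Real.norm_eq_abs, abs_of_nonneg (hφ0 _)]
        exact mul_le_of_le_one_left (norm_nonneg _) (hφ1 _)
      refine hle.trans ?_
      have hN : 0 ≤ ‖F τ‖ := norm_nonneg _
      change ‖F τ‖ ≤ K at d0
      change |τ| * ‖F τ‖ ≤ K at d1
      change |τ| ^ 2 * ‖F τ‖ ≤ K * (1 + a) at d2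
      refine le_min d0 (le_min ?_ ?_)
      · rw [le_div_iff₀ hx]
        have := mul_le_mul_of_nonneg_right l hN
        linarith
      · rw [le_div_iff₀ (by positivity)]
        have := mul_le_mul_of_nonneg_right (pow_le_pow_left₀ (by positivity) l 2) hN
        linarith
  have hInt : ∫ τ : ℝ, ‖g τ‖ ^ 2 ≤ 4 * x * S ^ 2 := by
    have e : ∫ τ : ℝ, ‖g τ‖ ^ 2 = ∫ τ in Set.Icc (-(2 * x)) (2 * x), ‖g τ‖ ^ 2 := by
      symm
      apply setIntegral_eq_integral_of_forall_compl_eq_zero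
      intro τ h
      have : g τ = 0 := by
        by_contra h0; exact h (hgsupp h0)
      simp [this]
    rw [e]
    have hm : ∫ τ in Set.Icc (-(2 * x)) (2 * x), ‖g τ‖ ^ 2 ≤
        ∫ τ in Set.Icc (-(2 * x)) (2 * x), S ^ 2 := by
      apply setIntegral_mono
      · exact ((hgs.continuous.norm.pow 2).continuousOn).integrableOn_Icc
      · exact continuousOn_const.integrableOn_Icc
      · intro τ
        exact pow_le_pow_left₀ (norm_nonneg _) (hgS τ) 2
    refine hm.trans (le_of_eq ?_)
    rw [setIntegral_const, smul_eq_mul, Measure.real, Real.volume_Icc, ENNReal.toReal_ofReal (by linarith)]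
    ring
  have hb : (x ≤ 1 ∧ (2 : ℝ) ^ (-|j|) = x) ∨ (1 ≤ x ∧ (2 : ℝ) ^ (-|j|) = x⁻¹) := by
    rcases le_total 0 j with h | h
    · right
      exact ⟨one_le_zpow₀ (by norm_num) h, by rw [abs_of_nonneg h, zpow_neg]⟩
    · left
      exact ⟨zpow_le_one_of_nonpos₀ (by norm_num) h, by rw [abs_of_nonpos h, neg_neg]⟩
  have hfin := aux_alg K a x S hK ha hx _ (by positivity) hb hS hS0 hS1 hS2
  have hI0 : 0 ≤ ∫ τ : ℝ, ‖g τ‖ ^ 2 := integral_nonneg (fun _ => by positivity)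
  change (1 + x + a) ^ ((1 : ℝ) / 2) * (∫ τ : ℝ, ‖g τ‖ ^ 2) ^ ((1 : ℝ) / 2) ≤ _
  rw [← Real.mul_rpow (by positivity) hI0]
  have e7 : 7 * K = ((7 * K) ^ 2) ^ ((1 : ℝ) / 2) := by
    rw [← Real.sqrt_eq_rpow, Real.sqrt_sq (by positivity)]
  rw [e7, ← Real.mul_rpow (by positivity) (by positivity), ← Real.mul_rpow (by positivity) (by positivity)]
  apply Real.rpow_le_rpow (by positivity) _ (by norm_num)
  calc (1 + x + a) * ∫ τ : ℝ, ‖g τ‖ ^ 2 ≤ (1 + x + a) * (4 * x * S ^ 2) := by gcongr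
    _ ≤ _ := hfin
    _ = _ := by ring



theorem stmt_15 (η : ℝ → ℂ) (hη : ContDiff ℝ (⊤ : ℕ∞) η)
    (hηsupp : Function.support η ⊆ Set.Icc (-2) 2)
    (φ : ℝ → ℝ) (hφ : ContDiff ℝ (⊤ : ℕ∞) φ)
    (hφ0 : ∀ τ, 0 ≤ φ τ) (hφ1 : ∀ τ, φ τ ≤ 1)
    (hφsupp : Function.support φ ⊆ {τ : ℝ | 1 / 2 ≤ |τ| ∧ |τ| ≤ 2}) :
    ∃ C : ℝ, 0 < C ∧ ∀ a : ℝ, 0 ≤ a →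
      Summable (fun j : ℤ =>
        (1 + (2 : ℝ) ^ j + a) ^ ((1 : ℝ) / 2) *
          (∫ t : ℝ, ‖∫ τ : ℝ, Complex.exp (2 * π * t * τ * Complex.I) *
              ((φ ((2 : ℝ) ^ (-j) * τ) : ℂ) *
                ∫ s : ℝ, Complex.exp (-(2 * π * s * τ) * Complex.I) *
                  (η s * ((Real.exp (2 * a * min s 0) - Real.exp (-(a * |s|)) : ℝ) : ℂ)))‖ ^ 2) ^
            ((1 : ℝ) / 2)) ∧
      (∑' j : ℤ,
        (1 + (2 : ℝ) ^ j + a) ^ ((1 : ℝ) / 2) *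
          (∫ t : ℝ, ‖∫ τ : ℝ, Complex.exp (2 * π * t * τ * Complex.I) *
              ((φ ((2 : ℝ) ^ (-j) * τ) : ℂ) *
                ∫ s : ℝ, Complex.exp (-(2 * π * s * τ) * Complex.I) *
                  (η s * ((Real.exp (2 * a * min s 0) - Real.exp (-(a * |s|)) : ℝ) : ℂ)))‖ ^ 2) ^
            ((1 : ℝ) / 2)) ≤ C * (1 + a) ^ ((1 : ℝ) / 2) := by
  obtain ⟨K, hK, hmain⟩ := aux_main η hη hηsupp φ hφ hφ0 hφ1 hφsupp
  have hT0 : 0 ≤ ∑' j : ℤ, ((2 : ℝ) ^ (-|j|)) ^ ((1 : ℝ) / 2) :=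
    tsum_nonneg (fun j => by positivity)
  refine ⟨7 * K * (1 + ∑' j : ℤ, ((2 : ℝ) ^ (-|j|)) ^ ((1 : ℝ) / 2)), by positivity, ?_⟩
  intro a ha
  have hm := hmain a ha
  simp only [mm] at hm
  have hs := aux_summable.mul_left (7 * K * (1 + a) ^ ((1 : ℝ) / 2))
  refine (and_iff_left_of_imp fun hsum => ?_).2 (Summable.of_nonneg_of_le (fun j => ?_) hm hs)
  · refine (hsum.tsum_le_tsum hm hs).trans ?_
    rw [tsum_mul_left]
    have : 0 ≤ 7 * K * (1 + a) ^ ((1 : ℝ) / 2) := by positivity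
    linarith
  · refine mul_nonneg (by positivity) (Real.rpow_nonneg (integral_nonneg fun t => by positivity) _)
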